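/- arXiv:2605.16907 — 2 statements merged into one kernel-verified Lean document; each statement's English description precedes it below -/
import Mathlib

section
/- The Bessel function J₀ is differentiable on ℝ and its derivative is −J₁; that is, for every real x, the function x ↦ (1/π)∫₀^π cos(x sin θ) dθ has derivative at x equal to −(1/π)∫₀^π cos(θ − x sin θ) dθ. -/
/-!
Differentiating under the integral sign gives `J₀' x = -(1 / π) ∫₀^π sin θ sin (x sin θ) dθ`.
Expanding `cos (θ - x sin θ)` produces the same integrand together with `cos θ cos (x sin θ)`, which
changes sign under the reflection `θ ↦ π - θ` and hence has integral zero over `[0, π]`.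
-/

open Real

/-- Bessel function of the first kind of order 0, via its integral representation. -/
noncomputable def besselJ0 (x : ℝ) : ℝ :=
  (1 / π) * ∫ θ in (0:ℝ)..π, Real.cos (x * Real.sin θ)

/-- Bessel function of the first kind of order 1, via its integral representation. -/
noncomputable def besselJ1 (x : ℝ) : ℝ :=
  (1 / π) * ∫ θ in (0:ℝ)..π, Real.cos (θ - x * Real.sin θ)

open MeasureTheory

theorem intervalIntegral_eq_zero_of_comp_add_sub_eq_neg {E : Type*} [NormedAddCommGroup E]
    [NormedSpace ℝ E] {f : ℝ → E} {a b : ℝ} (hf : ∀ t, f (a + b - t) = -f t) :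
    ∫ t in a..b, f t = 0 := by
  have h_reflect : ∫ t in a..b, f (a + b - t) = ∫ t in a..b, f t := by
    rw [intervalIntegral.integral_comp_sub_left, add_sub_cancel_right, add_sub_cancel_left]
  simp only [hf, intervalIntegral.integral_neg] at h_reflect
  have : IsAddTorsionFree E := .of_isTorsionFree ℝ E
  exact self_eq_neg.mp h_reflect.symm

theorem integral_cos_smul_comp_sin {E : Type*} [NormedAddCommGroup E] [NormedSpace ℝ E]
    (g : ℝ → E) : ∫ θ in (0 : ℝ)..π, cos θ • g (sin θ) = 0 :=
  intervalIntegral_eq_zero_of_comp_add_sub_eq_neg fun θ => by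
    rw [zero_add, cos_pi_sub, sin_pi_sub, neg_smul]

theorem integral_cos_sub_comp_sin {φ : ℝ → ℝ} (hφ : Continuous φ) :
    ∫ θ in (0 : ℝ)..π, cos (θ - φ (sin θ)) = ∫ θ in (0 : ℝ)..π, sin θ * sin (φ (sin θ)) := by
  have h_cos_zero : ∫ θ in (0 : ℝ)..π, cos θ * cos (φ (sin θ)) = 0 :=
    integral_cos_smul_comp_sin fun u => cos (φ u)
  simp only [cos_sub]
  rw [intervalIntegral.integral_add, h_cos_zero, zero_add] <;>
    exact Continuous.intervalIntegrable (by fun_prop) _ _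

theorem hasDerivAt_intervalIntegral_cos_mul {μ : Measure ℝ} [IsLocallyFiniteMeasure μ]
    {g : ℝ → ℝ} {a b : ℝ} (hg : IntervalIntegrable g μ a b) (x : ℝ) :
    HasDerivAt (fun y => ∫ t in a..b, cos (y * g t) ∂μ)
      (-∫ t in a..b, g t * sin (x * g t) ∂μ) x := by
  have hg_meas : AEStronglyMeasurable g (μ.restrict (Set.uIoc a b)) :=
    hg.aestronglyMeasurable_restrict_uIoc
  have h_cos_meas (y : ℝ) :
      AEStronglyMeasurable (fun t => cos (y * g t)) (μ.restrict (Set.uIoc a b)) :=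
    continuous_cos.comp_aestronglyMeasurable (hg_meas.const_mul y)
  have h_cos_int : IntervalIntegrable (fun t => cos (x * g t)) μ a b :=
    (intervalIntegrable_const (c := (1 : ℝ))).mono_fun (h_cos_meas x) <| .of_forall fun t => by
      simpa using abs_cos_le_one (x * g t)
  have h_deriv_meas :
      AEStronglyMeasurable (fun t => -(g t * sin (x * g t))) (μ.restrict (Set.uIoc a b)) :=
    (hg_meas.mul (continuous_sin.comp_aestronglyMeasurable (hg_meas.const_mul x))).neg
  have h_deriv_le (y t : ℝ) : ‖-(g t * sin (y * g t))‖ ≤ ‖g t‖ := by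
    rw [norm_neg, norm_mul]
    exact mul_le_of_le_one_right (norm_nonneg _) (abs_sin_le_one _)
  have h_deriv (y t : ℝ) : HasDerivAt (fun z => cos (z * g t)) (-(g t * sin (y * g t))) y := by
    simpa only [neg_mul, mul_comm (g t)] using (hasDerivAt_mul_const (g t)).cos
  rw [← intervalIntegral.integral_neg]
  exact (intervalIntegral.hasDerivAt_integral_of_dominated_loc_of_deriv_le Filter.univ_mem
    (.of_forall h_cos_meas) h_cos_int h_deriv_meas (.of_forall fun t _ y _ => h_deriv_le y t)
    hg.norm (.of_forall fun t _ y _ => h_deriv y t)).2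

theorem besselJ1_eq_integral_sin_mul_sin (x : ℝ) :
    besselJ1 x = (1 / π) * ∫ θ in (0 : ℝ)..π, sin θ * sin (x * sin θ) := by
  rw [besselJ1, integral_cos_sub_comp_sin (continuous_const_mul x)]

/-- `J₀` is differentiable on `ℝ` with derivative `-J₁`. -/
theorem besselJ0_hasDerivAt (x : ℝ) : HasDerivAt besselJ0 (-besselJ1 x) x := by
  rw [besselJ1_eq_integral_sin_mul_sin, ← mul_neg]
  have h_sin : IntervalIntegrable sin volume 0 π := continuous_sin.intervalIntegrable 0 π
  exact (hasDerivAt_intervalIntegral_cos_mul h_sin x).const_mul (1 / π)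
end

section
/- Let M ≥ 1 and let G be an M×M complex matrix whose Hermitian part (G + Gᴴ)/2 is positive definite. Then the complex Gaussian integral over ℂ^M (with respect to Lebesgue measure, identifying ℂ^M with ℝ^{2M}) satisfies ∫_{ℂ^M} exp(−wᴴ G w) dw = π^M / det G, where wᴴ G w = ∑_{r,s} conj(w_r) G_{r,s} w_s. -/
open Matrix MeasureTheory
open scoped ComplexOrder

/-!
Write `G = H + iK` with `H` positive definite and `K` Hermitian. Some invertible `P` satisfies
`Pᴴ H P = 1` and makes `Pᴴ K P` real diagonal, so `Pᴴ G P` is diagonal with entries of real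
part `1`. Substituting `w = P z` divides the integral by `|det P|²`, the Jacobian of `P` as a real
linear map, which is also the factor by which passing from `G` to `Pᴴ G P` multiplies the
determinant. The product of determinant and integral is therefore invariant under congruence, and
for a diagonal matrix the integral splits into one-dimensional Gaussian integrals `π / bᵢ` over `ℂ`.
-/

section Congruence

variable {ι 𝕜 : Type*} [Fintype ι] [DecidableEq ι] [RCLike 𝕜]

open scoped MatrixOrder in
lemma exists_conjTranspose_mul_mul_eq_one {H : Matrix ι ι 𝕜} (hH : H.PosDef) :
    ∃ P : Matrix ι ι 𝕜, Pᴴ * H * P = 1 := by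
  set S := CFC.sqrt H
  have hSS : S * S = H := CFC.sqrt_mul_sqrt_self H hH.posSemidef.nonneg
  have hS : Sᴴ = S := (CFC.sqrt_nonneg H).posSemidef.isHermitian
  have hdet : IsUnit S.det := isUnit_of_mul_isUnit_left <| by
    rw [← det_mul, hSS]
    exact hH.det_pos.ne'.isUnit
  refine ⟨S⁻¹, ?_⟩
  rw [conjTranspose_nonsing_inv, hS, ← hSS, nonsing_inv_mul_cancel_left _ _ hdet,
    mul_nonsing_inv _ hdet]

lemma exists_conjTranspose_mul_mul_eq_one_and_diagonal {H K : Matrix ι ι 𝕜} (hH : H.PosDef)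
    (hK : K.IsHermitian) :
    ∃ (P : Matrix ι ι 𝕜) (d : ι → ℝ),
      Pᴴ * H * P = 1 ∧ Pᴴ * K * P = diagonal fun i ↦ (d i : 𝕜) := by
  obtain ⟨Q, hQ⟩ := exists_conjTranspose_mul_mul_eq_one hH
  have hQK : (Qᴴ * K * Q).IsHermitian := isHermitian_conjTranspose_mul_mul Q hK
  let U : Matrix ι ι 𝕜 := (hQK.eigenvectorUnitary : Matrix ι ι 𝕜)
  have hU : Uᴴ * U = 1 := Unitary.coe_star_mul_self _
  have hUK : Uᴴ * (Qᴴ * K * Q) * U = diagonal fun i ↦ (hQK.eigenvalues i : 𝕜) :=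
    (Unitary.conjStarAlgAut_star_apply ..).symm.trans hQK.conjStarAlgAut_star_eigenvectorUnitary
  have hcongr (A : Matrix ι ι 𝕜) : (Q * U)ᴴ * A * (Q * U) = Uᴴ * (Qᴴ * A * Q) * U := by
    simp only [conjTranspose_mul, Matrix.mul_assoc]
  refine ⟨Q * U, hQK.eigenvalues, ?_, ?_⟩
  · rw [hcongr, hQ, Matrix.mul_one, hU]
  · rw [hcongr, hUK]

open scoped ComplexStarModule in
lemma exists_conjTranspose_mul_mul_eq_diagonal {G : Matrix ι ι ℂ}
    (hG : (ℜ G : Matrix ι ι ℂ).PosDef) :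
    ∃ (P : Matrix ι ι ℂ) (d : ι → ℝ), P.det ≠ 0 ∧
      Pᴴ * G * P = diagonal fun i ↦ 1 + Complex.I * d i := by
  obtain ⟨P, d, hre, him⟩ :=
    exists_conjTranspose_mul_mul_eq_one_and_diagonal hG (ℑ G).2
  refine ⟨P, d, (isUnit_det_of_left_inverse hre).ne_zero, ?_⟩
  calc Pᴴ * G * P = Pᴴ * ((ℜ G : Matrix ι ι ℂ) + Complex.I • (ℑ G : Matrix ι ι ℂ)) * P := by
        rw [realPart_add_I_smul_imaginaryPart]
    _ = Pᴴ * (ℜ G : Matrix ι ι ℂ) * P + Complex.I • (Pᴴ * (ℑ G : Matrix ι ι ℂ) * P) := by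
        rw [Matrix.mul_add, Matrix.add_mul, Matrix.mul_smul, Matrix.smul_mul]
    _ = diagonal fun i ↦ 1 + Complex.I * d i := by
        rw [hre, him, ← diagonal_one, ← diagonal_smul, diagonal_add]
        rfl

end Congruence

section ChangeOfVariables

variable {F : Type*} [NormedAddCommGroup F] [NormedSpace ℝ F]

lemma integral_comp_linearMap {E : Type*} [NormedAddCommGroup E] [NormedSpace ℝ E]
    [FiniteDimensional ℝ E] [MeasurableSpace E] [BorelSpace E] (μ : Measure E)
    [μ.IsAddHaarMeasure] {L : E →ₗ[ℝ] E} (hL : LinearMap.det L ≠ 0) (f : E → F) :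
    ∫ x, f (L x) ∂μ = |(LinearMap.det L)⁻¹| • ∫ x, f x ∂μ := by
  have hemb : MeasurableEmbedding L :=
    (LinearMap.equivOfDetNeZero L hL).toContinuousLinearEquiv.toHomeomorph.measurableEmbedding
  rw [← hemb.integral_map, Measure.map_linearMap_addHaar_eq_smul_addHaar μ hL,
    integral_smul_measure, ENNReal.toReal_ofReal (abs_nonneg _)]

variable {ι : Type*} [Fintype ι] [DecidableEq ι]

lemma integral_comp_complex_mulVec {P : Matrix ι ι ℂ} (hP : P.det ≠ 0) (f : (ι → ℂ) → F) :
    ∫ z, f (P *ᵥ z) = (Complex.normSq P.det)⁻¹ • ∫ w, f w := by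
  have hdet : LinearMap.det (P.toLin'.restrictScalars ℝ) = Complex.normSq P.det := by
    rw [LinearMap.det_restrictScalars, Algebra.norm_complex_apply, LinearMap.det_toLin']
  have hpos : 0 < Complex.normSq P.det := Complex.normSq_pos.mpr hP
  have h := integral_comp_linearMap volume (hdet.trans_ne hpos.ne') f
  rwa [hdet, abs_of_pos (inv_pos.mpr hpos)] at h

end ChangeOfVariables

section Gaussian

variable {ι : Type*} [Fintype ι] [DecidableEq ι]

lemma det_mul_integral_cexp_neg_congr (G : Matrix ι ι ℂ) {P : Matrix ι ι ℂ} (hP : P.det ≠ 0) :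
    (Pᴴ * G * P).det * ∫ z, Complex.exp (-(star z ⬝ᵥ ((Pᴴ * G * P) *ᵥ z))) =
      G.det * ∫ w, Complex.exp (-(star w ⬝ᵥ (G *ᵥ w))) := by
  have hform (z : ι → ℂ) :
      star z ⬝ᵥ ((Pᴴ * G * P) *ᵥ z) = star (P *ᵥ z) ⬝ᵥ (G *ᵥ (P *ᵥ z)) := by
    rw [star_mulVec, ← dotProduct_mulVec, mulVec_mulVec, mulVec_mulVec, Matrix.mul_assoc]
  have hdet : (Pᴴ * G * P).det = Complex.normSq P.det * G.det := by
    rw [det_mul, det_mul, det_conjTranspose, Complex.normSq_eq_conj_mul_self, Complex.star_def]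
    ring
  have hnormSq : (Complex.normSq P.det : ℂ) ≠ 0 :=
    Complex.ofReal_ne_zero.mpr (Complex.normSq_pos.mpr hP).ne'
  simp_rw [hform]
  rw [integral_comp_complex_mulVec hP fun w ↦ Complex.exp (-(star w ⬝ᵥ (G *ᵥ w))), hdet,
    Complex.real_smul, Complex.ofReal_inv]
  field_simp

lemma integral_cexp_neg_diagonal {b : ι → ℂ} (hb : ∀ i, 0 < (b i).re) :
    ∫ z, Complex.exp (-(star z ⬝ᵥ (diagonal b *ᵥ z))) = ∏ i, (Real.pi : ℂ) / b i := by
  have hprod (z : ι → ℂ) : Complex.exp (-(star z ⬝ᵥ (diagonal b *ᵥ z))) =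
      ∏ i, Complex.exp (-b i * (‖z i‖ : ℂ) ^ 2) := by
    rw [← Complex.exp_sum, dotProduct, ← Finset.sum_neg_distrib]
    congr! 2 with i
    rw [mulVec_diagonal, Pi.star_apply, ← Complex.conj_mul', Complex.star_def]
    ring
  have hplane (i : ι) :
      ∫ x : ℂ, Complex.exp (-b i * (‖x‖ : ℂ) ^ 2) = (Real.pi : ℂ) / b i := by
    rw [GaussianFourier.integral_cexp_neg_mul_sq_norm (hb i), Complex.finrank_real_complex,
      Nat.cast_ofNat, div_self two_ne_zero, Complex.cpow_one]
  simp_rw [hprod, ← hplane]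
  exact integral_fintype_prod_volume_eq_prod fun i (x : ℂ) ↦
    Complex.exp (-b i * (‖x‖ : ℂ) ^ 2)

open scoped ComplexStarModule in
theorem complex_gaussian_integral_general {G : Matrix ι ι ℂ}
    (hG : (((1 : ℂ) / 2) • (G + Gᴴ)).PosDef) :
    ∫ w : ι → ℂ, Complex.exp (-(star w ⬝ᵥ (G *ᵥ w))) =
      (Real.pi : ℂ) ^ Fintype.card ι / G.det := by
  have hre : ((1 : ℂ) / 2) • (G + Gᴴ) = ℜ G := by
    rw [realPart_apply_coe, star_eq_conjTranspose, ← Complex.coe_smul]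
    norm_num
  obtain ⟨P, d, hP, hPG⟩ := exists_conjTranspose_mul_mul_eq_diagonal (hre ▸ hG)
  set b : ι → ℂ := fun i ↦ 1 + Complex.I * d i
  have hb (i : ι) : 0 < (b i).re := by simp [b]
  have hbdet : (diagonal b).det ≠ 0 := by
    rw [det_diagonal]
    exact Finset.prod_ne_zero_iff.mpr fun i _ ↦ Complex.ne_zero_of_re_pos (hb i)
  have hGdet : G.det ≠ 0 := by
    rw [← hPG, det_mul, det_mul] at hbdet
    exact right_ne_zero_of_mul (left_ne_zero_of_mul hbdet)
  rw [eq_div_iff hGdet, mul_comm, ← det_mul_integral_cexp_neg_congr G hP, hPG,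
    integral_cexp_neg_diagonal hb, Finset.prod_div_distrib, Finset.prod_const, Finset.card_univ,
    ← det_diagonal, mul_div_cancel₀ _ hbdet]

end Gaussian

/-- Complex Gaussian integral: if the Hermitian part `(G + Gᴴ)/2` of `G` is positive
definite, then `∫_{ℂ^M} exp (-wᴴ G w) dw = π^M / det G`. -/
theorem complex_gaussian_integral (M : ℕ) (hM : 1 ≤ M)
    (G : Matrix (Fin M) (Fin M) ℂ) (hG : (((1 : ℂ) / 2) • (G + Gᴴ)).PosDef) :
    ∫ w : Fin M → ℂ, Complex.exp (-(star w ⬝ᵥ (G *ᵥ w))) = (Real.pi : ℂ) ^ M / G.det := by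
  simpa only [Fintype.card_fin] using complex_gaussian_integral_general hG
end
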